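/- Let (X,𝒜) and (Y,𝓑) be separated realcompact measurable spaces. Then (X,𝒜) and (Y,𝓑) are isomorphic as measurable spaces (i.e., there exists a bijection t : X → Y such that for every E ⊆ X, E ∈ 𝒜 if and only if t(E) ∈ 𝓑) if and only if the rings M(X,𝒜) and M(Y,𝓑) are isomorphic as rings. -/

import Mathlib

/-!
A ring isomorphism `φ : M(X) ≃ M(Y)` is composition with a point map `Y → X`. For `q : Y`, the
map `f ↦ φ f q` is a ring homomorphism `M(X) → ℝ`. It fixes the constants, because `ℝ` has no ring
endomorphism except the identity, so its kernel is a real maximal ideal, and by realcompactness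
that kernel is some `M_p`; subtracting constants gives `φ f q = f p` for all `f`
(`exists_eval_eq`). Doing this for `φ` and for `φ⁻¹` gives point maps `s : Y → X` and `t : X → Y`.
Both composites leave every measurable function unchanged, so they are identities since measurable
functions separate points (`Separated.eq_of_forall_eval`). Since `φ f = f ∘ s` is measurable for
each measurable `f`, in particular for indicators, `s` is measurable
(`measurable_of_forall_eval`), and likewise `t`.
-/

open MeasureTheory

/-- The ring `M(X, 𝒜)` of all real-valued measurable functions on a measurable
space `X`, as a subring of `X → ℝ` under pointwise operations. -/
def Mring (X : Type*) [MeasurableSpace X] : Subring (X → ℝ) where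
  carrier := {f : X → ℝ | Measurable f}
  mul_mem' hf hg := hf.mul hg
  one_mem' := measurable_one
  add_mem' hf hg := hf.add hg
  zero_mem' := measurable_zero
  neg_mem' hf := hf.neg

/-- The constant function with value `r`, as an element of `M(X, 𝒜)`. -/
def constM (X : Type*) [MeasurableSpace X] (r : ℝ) : Mring X :=
  ⟨fun _ => r, measurable_const⟩

/-- A real maximal ideal: a maximal ideal modulo which every function is
congruent to a constant. -/
def IsRealMax {X : Type*} [MeasurableSpace X] (M : Ideal (Mring X)) : Prop :=
  M.IsMaximal ∧ ∀ f : Mring X, ∃ r : ℝ, f - constM X r ∈ M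

/-- The fixed ideal `M_p = {f ∈ M(X,𝒜) : f(p) = 0}`. -/
def Mp (X : Type*) [MeasurableSpace X] (p : X) : Ideal (Mring X) where
  carrier := {f : Mring X | (f : X → ℝ) p = 0}
  add_mem' := by
    intro a b ha hb
    simp only [Set.mem_setOf_eq] at *
    show ((a + b : Mring X) : X → ℝ) p = 0
    simp [ha, hb]
  zero_mem' := by simp only [Set.mem_setOf_eq]; rfl
  smul_mem' := by
    intro c f hf
    simp only [Set.mem_setOf_eq, smul_eq_mul] at *
    show ((c * f : Mring X) : X → ℝ) p = 0
    simp [hf]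

/-- A measurable space is separated if any two distinct points are separated by
a measurable set containing exactly one of them. -/
def Separated (X : Type*) [MeasurableSpace X] : Prop :=
  ∀ p q : X, p ≠ q → ∃ E : Set X, MeasurableSet E ∧ Xor' (p ∈ E) (q ∈ E)

/-- A measurable space is realcompact if every real maximal ideal of
`M(X,𝒜)` is fixed, i.e. of the form `M_p`. -/
def Realcompact (X : Type*) [MeasurableSpace X] : Prop :=
  ∀ M : Ideal (Mring X), IsRealMax M → ∃ p : X, M = Mp X p

/-- Evaluation at `p`, as a ring homomorphism `M(X) → ℝ`. -/
def evalM (X : Type*) [MeasurableSpace X] (p : X) : Mring X →+* ℝ :=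
  (Pi.evalRingHom (fun _ : X => ℝ) p).comp (Mring X).subtype

/-- The embedding of `ℝ` into `M(X)` as the constant functions. -/
def constHom (X : Type*) [MeasurableSpace X] : ℝ →+* Mring X where
  toFun := constM X
  map_one' := rfl
  map_mul' _ _ := rfl
  map_zero' := rfl
  map_add' _ _ := rfl

lemma ringHom_constM {X : Type*} [MeasurableSpace X] (h : Mring X →+* ℝ) (r : ℝ) :
    h (constM X r) = r :=
  congrArg (fun g : ℝ →+* ℝ => g r) (Subsingleton.elim (h.comp (constHom X)) (RingHom.id ℝ))

/-- On a realcompact space, every ring homomorphism `M(X) → ℝ` is evaluation at a point. -/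
lemma exists_eval_eq {X : Type*} [MeasurableSpace X] (hr : Realcompact X) (h : Mring X →+* ℝ) :
    ∃ p : X, ∀ f : Mring X, h f = (f : X → ℝ) p := by
  have hsurj : Function.Surjective h := fun r => ⟨constM X r, ringHom_constM h r⟩
  have hsub (f : Mring X) : f - constM X (h f) ∈ RingHom.ker h := by
    rw [RingHom.mem_ker, map_sub, ringHom_constM, sub_self]
  obtain ⟨p, hp⟩ := hr (RingHom.ker h)
    ⟨RingHom.ker_isMaximal_of_surjective h hsurj, fun f => ⟨h f, hsub f⟩⟩
  refine ⟨p, fun f => ?_⟩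
  have hf : f - constM X (h f) ∈ Mp X p := hp ▸ hsub f
  have hz : (f : X → ℝ) p - h f = 0 := hf
  linarith

/-- The indicator function of a measurable set, as an element of `M(X)`. -/
noncomputable def indM {X : Type*} [MeasurableSpace X] (E : Set X) (hE : MeasurableSet E) :
    Mring X :=
  ⟨E.indicator 1, measurable_one.indicator hE⟩

lemma indM_eq_one_iff {X : Type*} [MeasurableSpace X] (E : Set X) (hE : MeasurableSet E) (p : X) :
    (indM E hE : X → ℝ) p = 1 ↔ p ∈ E := by
  by_cases h : p ∈ E <;> simp [indM, h]

lemma Separated.eq_of_forall_eval {X : Type*} [MeasurableSpace X] (hs : Separated X) {p q : X}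
    (h : ∀ f : Mring X, (f : X → ℝ) p = (f : X → ℝ) q) : p = q := by
  by_contra hpq
  obtain ⟨E, hE, hx⟩ := hs p q hpq
  have hiff : p ∈ E ↔ q ∈ E := by
    rw [← indM_eq_one_iff E hE, ← indM_eq_one_iff E hE, h]
  rcases hx with ⟨h1, h2⟩ | ⟨h1, h2⟩
  · exact h2 (hiff.1 h1)
  · exact h2 (hiff.2 h1)

lemma measurable_of_forall_eval {X Y : Type*} [MeasurableSpace X] [MeasurableSpace Y]
    (φ : Mring X → Mring Y) (s : Y → X)
    (h : ∀ (f : Mring X) (q : Y), (φ f : Y → ℝ) q = (f : X → ℝ) (s q)) : Measurable s := by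
  intro E hE
  have hm : Measurable (φ (indM E hE) : Y → ℝ) := (φ (indM E hE)).2
  convert hm (measurableSet_singleton (1 : ℝ)) using 1
  ext q
  simp only [Set.mem_preimage, Set.mem_singleton_iff, h, indM_eq_one_iff]

/-- Composition with a measurable equivalence, as an isomorphism of the function rings. -/
def ringEquivOfMeasurableEquiv {X Y : Type*} [MeasurableSpace X] [MeasurableSpace Y]
    (e : X ≃ᵐ Y) : Mring X ≃+* Mring Y where
  toFun f := ⟨(f : X → ℝ) ∘ e.symm, Measurable.comp f.2 e.symm.measurable⟩
  invFun g := ⟨(g : Y → ℝ) ∘ e, Measurable.comp g.2 e.measurable⟩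
  left_inv f := by ext x; simp
  right_inv g := by ext y; simp
  map_mul' _ _ := rfl
  map_add' _ _ := rfl

/-- Two separated realcompact measurable spaces are isomorphic (as measurable
spaces) iff the rings `M(X,𝒜)` and `M(Y,𝓑)` are isomorphic. -/
theorem stmt4 {X Y : Type*} [MeasurableSpace X] [MeasurableSpace Y]
    (hsX : Separated X) (hsY : Separated Y)
    (hrX : Realcompact X) (hrY : Realcompact Y) :
    (∃ t : X → Y, Function.Bijective t ∧
        ∀ E : Set X, MeasurableSet E ↔ MeasurableSet (t '' E)) ↔
      Nonempty (Mring X ≃+* Mring Y) := by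
  constructor
  · rintro ⟨t, ht, hE⟩
    let e : X ≃ Y := Equiv.ofBijective t ht
    have hm : Measurable e := fun F hF => (hE _).2 <| by
      have : t '' (t ⁻¹' F) = F := Set.image_preimage_eq F ht.surjective
      exact this.symm ▸ hF
    have hm' : Measurable e.symm := fun E h => by
      rw [← e.image_eq_preimage_symm]
      exact (hE E).1 h
    exact ⟨ringEquivOfMeasurableEquiv ⟨e, hm, hm'⟩⟩
  · rintro ⟨φ⟩
    choose s hs using fun q : Y => exists_eval_eq hrX ((evalM Y q).comp φ.toRingHom)
    choose t ht using fun p : X => exists_eval_eq hrY ((evalM X p).comp φ.symm.toRingHom)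
    have hs' (f : Mring X) (q : Y) : (φ f : Y → ℝ) q = (f : X → ℝ) (s q) := hs q f
    have ht' (g : Mring Y) (p : X) : (φ.symm g : X → ℝ) p = (g : Y → ℝ) (t p) := ht p g
    have hst (p : X) : s (t p) = p := hsX.eq_of_forall_eval fun f => by
      rw [← hs', ← ht', φ.symm_apply_apply]
    have hts (q : Y) : t (s q) = q := hsY.eq_of_forall_eval fun g => by
      rw [← ht', ← hs', φ.apply_symm_apply]
    let e : X ≃ᵐ Y := ⟨⟨t, s, hst, hts⟩,
      measurable_of_forall_eval φ.symm t ht', measurable_of_forall_eval φ s hs'⟩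
    exact ⟨t, e.bijective, fun E => (e.measurableSet_image (s := E)).symm⟩
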